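/- arXiv:2505.07016 — 2 statements merged into one kernel-verified Lean document; each statement's English description precedes it below -/
import Mathlib

section
/- Fix t ≥ 0 and set n = ⌈exp(D(p‖q) + t)⌉ and ε = (e^{−t/4} + 2·√(P_{X∼p}(log ρ(X) > D(p‖q) + t/2)))^{1/2}. Then, with probability at least 1 − 2ε over the draw of Y₁,…,Y_n i.i.d. from q, the importance-weighted selection satisfies |E_{m∼w}[f(Y_m)] − E_{X∼p}[f(X)]| ≤ 2 ‖f‖_{2,p} · ε/(1−ε). -/
open scoped BigOperators

/-- Kullback–Leibler divergence between mass functions on a countable alphabet. -/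
noncomputable def klDiv {𝒳 : Type*} (p q : 𝒳 → ℝ) : ℝ :=
  ∑' x, p x * Real.log (p x / q x)

open MeasureTheory ProbabilityTheory

lemma aux_l1_le_l2 {Ω : Type*} [MeasurableSpace Ω] (μ : Measure Ω) [IsProbabilityMeasure μ]
    (X : Ω → ℝ) (hX : MemLp X 2 μ) : ∫ ω, |X ω| ∂μ ≤ Real.sqrt (∫ ω, X ω ^ 2 ∂μ) := by
  apply Real.le_sqrt_of_sq_le
  have h := variance_eq_sub hX.abs
  have h0 := variance_nonneg |X| μ
  rw [h] at h0
  simp only [Pi.pow_apply, Pi.abs_apply, sq_abs] at h0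
  linarith

lemma aux_var {Ω : Type*} [MeasurableSpace Ω] (Q : Measure Ω) [IsProbabilityMeasure Q]
    (n : ℕ) (hn : 0 < n) (g : Ω → ℝ) (hg : MemLp g 2 Q) :
    ∫ y : Fin n → Ω, |(∑ j, g (y j)) / n - ∫ x, g x ∂Q| ∂(Measure.pi fun _ => Q)
      ≤ Real.sqrt ((∫ x, g x ^ 2 ∂Q) / n) := by
  have hn' : (0:ℝ) < n := by exact_mod_cast hn
  have hmem : ∀ j : Fin n, MemLp (fun y : Fin n → Ω => g (y j)) 2 (Measure.pi fun _ => Q) :=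
    fun j => hg.comp_measurePreserving (measurePreserving_eval (fun _ => Q) j)
  have hS : MemLp (∑ j, fun y : Fin n → Ω => g (y j)) 2 (Measure.pi fun _ => Q) :=
    memLp_finsetSum' _ (fun j _ => hmem j)
  have hmean : ∫ y, (∑ j, fun y : Fin n → Ω => g (y j)) y ∂(Measure.pi fun _ => Q)
      = n * ∫ x, g x ∂Q := by
    simp only [Finset.sum_apply]
    rw [integral_finsetSum _ (fun j _ => (hmem j).integrable (by norm_num))]
    have : ∀ j : Fin n, ∫ y : Fin n → Ω, g (y j) ∂(Measure.pi fun _ => Q) = ∫ x, g x ∂Q :=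
      fun j => integral_comp_eval (μ := fun _ : Fin n => Q) hg.aestronglyMeasurable
    simp [this]
  have hvar := variance_sum_pi (μ := fun _ : Fin n => Q) (X := fun _ => g) (fun _ => hg)
  have hle := variance_le_expectation_sq (μ := Q) (X := g) hg.aestronglyMeasurable
  rw [variance_eq_integral hS.aemeasurable, hmean] at hvar
  simp only [Finset.sum_apply, Finset.sum_const, Finset.card_univ, Fintype.card_fin,
    nsmul_eq_mul] at hvar
  have hS' : MemLp (fun y : Fin n → Ω => (∑ j, g (y j)) / n - ∫ x, g x ∂Q) 2
      (Measure.pi fun _ => Q) := by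
    have := (hS.const_mul ((n:ℝ)⁻¹)).sub (memLp_const (∫ x, g x ∂Q))
    refine this.ae_eq (Filter.Eventually.of_forall fun y => ?_)
    simp [div_eq_inv_mul]
  refine (aux_l1_le_l2 _ _ hS').trans (Real.sqrt_le_sqrt ?_)
  have : ∀ y : Fin n → Ω, ((∑ j, g (y j)) / n - ∫ x, g x ∂Q) ^ 2
      = ((n:ℝ)^2)⁻¹ * ((∑ j, g (y j)) - n * ∫ x, g x ∂Q) ^ 2 := by
    intro y; field_simp
  simp_rw [this]
  rw [integral_const_mul, hvar]
  have h3 : ∫ x, (g ^ 2) x ∂Q = ∫ x, g x ^ 2 ∂Q := rfl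
  rw [h3] at hle
  calc _ = Var[g; Q] / n := by field_simp
    _ ≤ _ := by gcongr

lemma aux_l1 {Ω : Type*} [MeasurableSpace Ω] (Q : Measure Ω) [IsProbabilityMeasure Q]
    (n : ℕ) (hn : 0 < n) (g₁ g₂ : Ω → ℝ) (h1 : Integrable g₁ Q) (h2 : MemLp g₂ 2 Q) :
    Integrable (fun y : Fin n → Ω => |(∑ j, (g₁ (y j) + g₂ (y j))) / n - ∫ x, (g₁ x + g₂ x) ∂Q|)
      (Measure.pi fun _ => Q) ∧
    ∫ y : Fin n → Ω, |(∑ j, (g₁ (y j) + g₂ (y j))) / n - ∫ x, (g₁ x + g₂ x) ∂Q|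
        ∂(Measure.pi fun _ => Q)
      ≤ 2 * ∫ x, |g₁ x| ∂Q + Real.sqrt ((∫ x, g₂ x ^ 2 ∂Q) / n) := by
  have hn' : (0:ℝ) < n := by exact_mod_cast hn
  have h2' : Integrable g₂ Q := h2.integrable (by norm_num)
  have key : ∀ g : Ω → ℝ, Integrable g Q → Integrable (fun y : Fin n → Ω => (∑ j, g (y j)) / n)
      (Measure.pi fun _ => Q) := fun g hg =>
    (integrable_finsetSum _ fun j _ => integrable_comp_eval (μ := fun _ : Fin n => Q) hg).div_const _
  have key2 : ∀ g : Ω → ℝ, Integrable g Q → ∫ y : Fin n → Ω, (∑ j, g (y j)) / n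
      ∂(Measure.pi fun _ => Q) = ∫ x, g x ∂Q := by
    intro g hg
    rw [integral_div, integral_finsetSum _ fun j _ =>
      integrable_comp_eval (μ := fun _ : Fin n => Q) hg]
    have : ∀ j : Fin n, ∫ y : Fin n → Ω, g (y j) ∂(Measure.pi fun _ => Q) = ∫ x, g x ∂Q :=
      fun j => integral_comp_eval (μ := fun _ : Fin n => Q) hg.aestronglyMeasurable
    simp [this]
    field_simp
  refine ⟨((key _ (h1.add h2')).sub (integrable_const _)).abs, ?_⟩
  have hI2 : Integrable (fun y : Fin n → Ω => |(∑ j, g₂ (y j)) / n - ∫ x, g₂ x ∂Q|)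
      (Measure.pi fun _ => Q) := ((key _ h2').sub (integrable_const _)).abs
  have hI1 := key _ h1.abs
  calc _ ≤ ∫ y : Fin n → Ω, ((∑ j, |g₁ (y j)|) / n + ∫ x, |g₁ x| ∂Q)
            + |(∑ j, g₂ (y j)) / n - ∫ x, g₂ x ∂Q| ∂(Measure.pi fun _ => Q) := by
        apply integral_mono ((key _ (h1.add h2')).sub (integrable_const _)).abs
          ((hI1.add (integrable_const _)).add hI2)
        intro y
        have e : (∑ j, (g₁ (y j) + g₂ (y j))) / n - ∫ x, (g₁ x + g₂ x) ∂Q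
            = (∑ j, g₁ (y j)) / n - ∫ x, g₁ x ∂Q + ((∑ j, g₂ (y j)) / n - ∫ x, g₂ x ∂Q) := by
          rw [integral_add h1 h2', Finset.sum_add_distrib]; ring
        change |(∑ j, (g₁ (y j) + g₂ (y j))) / n - ∫ x, (g₁ x + g₂ x) ∂Q|
          ≤ ((∑ j, |g₁ (y j)|) / n + ∫ x, |g₁ x| ∂Q) + |(∑ j, g₂ (y j)) / n - ∫ x, g₂ x ∂Q|
        rw [e]
        refine (abs_add_le _ _).trans ?_
        gcongr
        refine (abs_sub _ _).trans ?_
        gcongr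
        · rw [abs_div, abs_of_pos hn']
          gcongr
          exact Finset.abs_sum_le_sum_abs _ _
        · exact abs_integral_le_integral_abs
    _ = 2 * ∫ x, |g₁ x| ∂Q + ∫ y : Fin n → Ω, |(∑ j, g₂ (y j)) / n - ∫ x, g₂ x ∂Q|
          ∂(Measure.pi fun _ => Q) := by
        have hI3 : Integrable (fun y : Fin n → Ω => (∑ j, |g₁ (y j)|) / n + ∫ x, |g₁ x| ∂Q)
          (Measure.pi fun _ => Q) := hI1.add (integrable_const _)
        rw [integral_add hI3 hI2, integral_add hI1 (integrable_const _),
          key2 _ h1.abs]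
        simp; ring
    _ ≤ _ := by gcongr; exact aux_var Q n hn g₂ h2

noncomputable def auxQ {α : Type*} [MeasurableSpace α] (q : α → ℝ) : Measure α :=
  Measure.count.withDensity fun x => ENNReal.ofReal (q x)

section
variable {α : Type*} [MeasurableSpace α] [Countable α] [DiscreteMeasurableSpace α]

lemma auxQ_singleton (q : α → ℝ) (x : α) : auxQ q {x} = ENNReal.ofReal (q x) := by
  simp [auxQ, withDensity_apply]

lemma auxQ_integrable (q : α → ℝ) (hq0 : ∀ x, 0 ≤ q x) (g : α → ℝ) : Integrable g (auxQ q) ↔ Summable fun x => |q x * g x| := by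
  rw [auxQ, integrable_withDensity_iff_integrable_smul' (by measurability) (by simp),
    integrable_count_iff]
  simp [ENNReal.toReal_ofReal (hq0 _), Real.norm_eq_abs]

lemma auxQ_integral (q : α → ℝ) (hq0 : ∀ x, 0 ≤ q x) (g : α → ℝ) (hg : Summable fun x => |q x * g x|) :
    ∫ x, g x ∂(auxQ q) = ∑' x, q x * g x := by
  rw [integral_countable ((auxQ_integrable q hq0 g).2 hg)]
  simp [measureReal_def, auxQ_singleton, ENNReal.toReal_ofReal (hq0 _)]

lemma auxQ_prob (q : α → ℝ) (hq0 : ∀ x, 0 ≤ q x) (hq1 : HasSum q 1) : IsProbabilityMeasure (auxQ q) := by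
  constructor
  rw [auxQ, withDensity_apply _ MeasurableSet.univ, Measure.restrict_univ, lintegral_count,
    ← ENNReal.ofReal_tsum_of_nonneg hq0 hq1.summable, hq1.tsum_eq, ENNReal.ofReal_one]

lemma auxQ_pi (q : α → ℝ) (hq0 : ∀ x, 0 ≤ q x) (hq1 : HasSum q 1) (n : ℕ) (S : Set (Fin n → α)) :
    ∑' y : Fin n → α, S.indicator (fun y => ∏ j, q (y j)) y
      = (Measure.pi fun _ : Fin n => auxQ q).real S := by
  have := auxQ_prob q hq0 hq1
  have hS : MeasurableSet S := S.to_countable.measurableSet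
  have hi : Integrable (S.indicator (1 : (Fin n → α) → ℝ)) (Measure.pi fun _ : Fin n => auxQ q) :=
    (integrable_const (1:ℝ)).indicator hS
  rw [← integral_indicator_one hS, integral_countable hi]
  refine tsum_congr fun y => ?_
  by_cases h : y ∈ S
  · simp [h, measureReal_def, auxQ_singleton, ENNReal.toReal_prod, ENNReal.toReal_ofReal (hq0 _)]
  · simp [h]
end

lemma aux_cs {α : Type*} (p : α → ℝ) (hp0 : ∀ x, 0 ≤ p x) (hp : Summable p) (f : α → ℝ)
    (hf : Summable fun x => p x * f x ^ 2) (A : Set α) :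
    (Summable fun x => A.indicator p x * |f x|) ∧
    ∑' x, A.indicator p x * |f x| ≤
      Real.sqrt (∑' x, p x * f x ^ 2) * Real.sqrt (∑' x, A.indicator p x) := by
  have hA0 : ∀ x, 0 ≤ A.indicator p x := fun x => Set.indicator_nonneg (fun x _ => hp0 x) x
  have e1 : ∀ x, (Real.sqrt (p x) * |f x|) ^ (2:ℝ) = p x * f x ^ 2 := fun x => by
    rw [Real.rpow_two, mul_pow, Real.sq_sqrt (hp0 x), sq_abs]
  have e2 : ∀ x, (Real.sqrt (A.indicator p x)) ^ (2:ℝ) = A.indicator p x := fun x => by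
    rw [Real.rpow_two, Real.sq_sqrt (hA0 x)]
  have e3 : ∀ x, Real.sqrt (p x) * |f x| * Real.sqrt (A.indicator p x)
      = A.indicator p x * |f x| := fun x => by
    by_cases h : x ∈ A
    · simp only [Set.indicator_of_mem h]
      linear_combination |f x| * Real.mul_self_sqrt (hp0 x)
    · simp [h]
  have := Real.summable_and_inner_le_Lp_mul_Lq_tsum_of_nonneg Real.HolderConjugate.two_two
    (f := fun x => Real.sqrt (p x) * |f x|) (g := fun x => Real.sqrt (A.indicator p x))
    (fun x => by positivity) (fun x => by positivity)
    (by simpa only [e1] using hf) (by simpa only [e2] using hp.indicator A)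
  simp only [e1, e2, e3, ← Real.sqrt_eq_rpow] at this
  exact this

lemma aux_main {α : Type*} [MeasurableSpace α] [Countable α] [DiscreteMeasurableSpace α]
    (p q : α → ℝ) (hp0 : ∀ x, 0 ≤ p x) (hq0 : ∀ x, 0 ≤ q x)
    (hp : Summable p) (hq1 : HasSum q 1) (hac : ∀ x, q x = 0 → p x = 0)
    (f : α → ℝ) (hf2 : Summable fun x => p x * f x ^ 2)
    (c t : ℝ) (n : ℕ) (hn : Real.exp (c + t / 2) ≤ n) :
    Integrable (fun y : Fin n → α => |(∑ j, p (y j) / q (y j) * f (y j)) / n - ∑' x, p x * f x|)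
      (Measure.pi fun _ => auxQ q) ∧
    ∫ y : Fin n → α, |(∑ j, p (y j) / q (y j) * f (y j)) / n - ∑' x, p x * f x|
        ∂(Measure.pi fun _ => auxQ q)
      ≤ Real.sqrt (∑' x, p x * f x ^ 2) * (Real.exp (-t / 4)
        + 2 * Real.sqrt (∑' x, Set.indicator {x | c < Real.log (p x / q x)} p x)) := by
  have := auxQ_prob q hq0 hq1
  set A : Set α := {x | c < Real.log (p x / q x)} with hA
  have hn' : (0:ℝ) < n := (Real.exp_pos _).trans_le hn
  have hqp : ∀ x, q x * (p x / q x) = p x := fun x => by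
    by_cases h : q x = 0
    · simp [h, hac x h]
    · field_simp
  set g : α → ℝ := fun x => p x / q x * f x with hg
  have hqg : ∀ x, q x * g x = p x * f x := fun x => by
    rw [hg]; simp only; rw [← mul_assoc, hqp]
  obtain ⟨hs1, hb1⟩ := aux_cs p hp0 hp f hf2 A
  obtain ⟨hs0, -⟩ := aux_cs p hp0 hp f hf2 Set.univ
  have e1 : ∀ x, |q x * A.indicator g x| = A.indicator p x * |f x| := fun x => by
    by_cases h : x ∈ A
    · simp only [Set.indicator_of_mem h, hqg, abs_mul, abs_of_nonneg (hp0 x)]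
    · simp [h]
  have e1' : ∀ x, |q x * abs (A.indicator g x)| = A.indicator p x * |f x| := fun x => by
    rw [← e1, abs_mul, abs_abs, ← abs_mul]
  have hI1 : Integrable (A.indicator g) (auxQ q) := by
    rw [auxQ_integrable q hq0]; simpa only [e1] using hs1
  have hint1 : ∫ x, |A.indicator g x| ∂(auxQ q) = ∑' x, A.indicator p x * |f x| := by
    rw [auxQ_integral q hq0 _ (by simpa only [e1'] using hs1)]
    refine tsum_congr fun x => ?_
    rw [← e1' x, abs_of_nonneg (mul_nonneg (hq0 x) (abs_nonneg _))]
  have e2 : ∀ x, |q x * (Aᶜ.indicator g x) ^ 2| ≤ Real.exp c * (p x * f x ^ 2) := fun x => by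
    by_cases h : x ∈ A
    · simp only [Set.indicator_of_notMem (Set.notMem_compl_iff.2 h)]
      have := hp0 x
      simp; positivity
    · rw [Set.indicator_of_mem (show x ∈ Aᶜ from h), abs_of_nonneg (mul_nonneg (hq0 x) (sq_nonneg _))]
      have e : q x * g x ^ 2 = (p x / q x) * (p x * f x ^ 2) := by
        linear_combination (p x / q x * f x) * hqg x
      rw [e]
      rcases (hp0 x).eq_or_lt with h0 | h0
      · simp [← h0]
      · have hq : 0 < q x := (hq0 x).lt_of_ne fun h' => h0.ne' (hac x h'.symm)
        gcongr
        rw [hA, Set.mem_ofPred_eq, not_lt] at h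
        exact (Real.log_le_iff_le_exp (by positivity)).1 h
  have hsum2 : Summable fun x => |q x * (Aᶜ.indicator g x) ^ 2| :=
    Summable.of_nonneg_of_le (fun _ => abs_nonneg _) e2 (hf2.mul_left _)
  have hM2 : MemLp (Aᶜ.indicator g) 2 (auxQ q) := by
    rw [memLp_two_iff_integrable_sq (measurable_of_countable _).aestronglyMeasurable,
      auxQ_integrable q hq0]
    exact hsum2
  have hint2 : ∫ x, (Aᶜ.indicator g x) ^ 2 ∂(auxQ q) ≤ Real.exp c * ∑' x, p x * f x ^ 2 := by
    rw [auxQ_integral q hq0 _ hsum2, ← tsum_mul_left]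
    exact hsum2.of_abs.tsum_le_tsum (fun x => (le_abs_self _).trans (e2 x)) (hf2.mul_left _)
  have hsplit : ∀ x, A.indicator g x + Aᶜ.indicator g x = g x := fun x =>
    congrFun (Set.indicator_self_add_compl A g) x
  have hintg : ∫ x, g x ∂(auxQ q) = ∑' x, p x * f x := by
    rw [auxQ_integral q hq0]
    · simp only [hqg]
    · simpa [hqg, abs_mul, abs_of_nonneg (hp0 _)] using hs0
  have hn0 : 0 < n := by exact_mod_cast hn'
  have main := aux_l1 (auxQ q) n hn0 _ _ hI1 hM2
  simp only [hsplit, hintg] at main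
  refine ⟨main.1, main.2.trans ?_⟩
  rw [hint1]
  have hF : 0 ≤ ∑' x, p x * f x ^ 2 := tsum_nonneg fun x => mul_nonneg (hp0 x) (sq_nonneg _)
  have h3 : Real.sqrt ((∫ x, (Aᶜ.indicator g x) ^ 2 ∂(auxQ q)) / n)
      ≤ Real.sqrt (∑' x, p x * f x ^ 2) * Real.exp (-t / 4) := by
    rw [Real.sqrt_le_left (by positivity), mul_pow, Real.sq_sqrt hF, ← Real.exp_nat_mul,
      div_le_iff₀ hn']
    refine hint2.trans ?_
    have : Real.exp c ≤ Real.exp (((2:ℕ):ℝ) * (-t/4)) * n := by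
      calc Real.exp c = Real.exp (((2:ℕ):ℝ) * (-t/4)) * Real.exp (c + t/2) := by
            rw [← Real.exp_add]; congr 1; push_cast; ring
        _ ≤ _ := by gcongr
    nlinarith
  nlinarith

/-- high-probability bias bound for minimal random coding /
importance-weighted selection. -/
theorem stmt0 {𝒳 : Type*} [Countable 𝒳]
    (p q : 𝒳 → ℝ)
    (hp0 : ∀ x, 0 ≤ p x) (hq0 : ∀ x, 0 ≤ q x)
    (hp1 : HasSum p 1) (hq1 : HasSum q 1)
    (hac : ∀ x, q x = 0 → p x = 0)
    (hKL : Summable fun x => p x * Real.log (p x / q x))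
    (f : 𝒳 → ℝ)
    (hf2 : Summable fun x => p x * f x ^ 2)
    (t : ℝ) (ht : 0 ≤ t)
    (n : ℕ) (hn : n = ⌈Real.exp (klDiv p q + t)⌉₊)
    (ε : ℝ)
    (hε : ε = Real.sqrt (Real.exp (-t / 4)
      + 2 * Real.sqrt (∑' x, Set.indicator
          {x : 𝒳 | klDiv p q + t / 2 < Real.log (p x / q x)} p x))) :
    1 - 2 * ε ≤
      ∑' y : Fin n → 𝒳,
        Set.indicator
          {y : Fin n → 𝒳 |
            |(∑ j, p (y j) / q (y j) * f (y j)) / (∑ j, p (y j) / q (y j))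
                - ∑' x, p x * f x|
              ≤ 2 * Real.sqrt (∑' x, p x * f x ^ 2) * (ε / (1 - ε))}
          (fun y => ∏ j, q (y j)) y := by
  let _ : MeasurableSpace 𝒳 := ⊤
  have := auxQ_prob q hq0 hq1
  rw [auxQ_pi q hq0 hq1]
  rcases le_or_gt (1 / 2) ε with h | hε2
  · exact le_trans (by linarith) measureReal_nonneg
  have hnn : Real.exp (klDiv p q + t / 2 + t / 2) ≤ n := by
    rw [hn, show klDiv p q + t / 2 + t / 2 = klDiv p q + t by ring]
    exact Nat.le_ceil _
  have hn0 : (0:ℝ) < n := (Real.exp_pos _).trans_le hnn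
  have hε0 : 0 < ε := by rw [hε]; exact Real.sqrt_pos.2 (by positivity)
  have hεsq : ε ^ 2 = Real.exp (-t / 4) + 2 * Real.sqrt (∑' x, Set.indicator
      {x : 𝒳 | klDiv p q + t / 2 < Real.log (p x / q x)} p x) := by
    rw [hε, Real.sq_sqrt (by positivity)]
  set F := Real.sqrt (∑' x, p x * f x ^ 2) with hF
  have hF0 : 0 ≤ F := Real.sqrt_nonneg _
  obtain ⟨i1, b1⟩ := aux_main p q hp0 hq0 hp1.summable hq1 hac f hf2 _ t n hnn
  obtain ⟨i2, b2⟩ := aux_main p q hp0 hq0 hp1.summable hq1 hac (fun _ => 1)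
    (by simpa using hp1.summable) _ t n hnn
  rw [← hεsq] at b1 b2
  simp only [one_pow, mul_one, hp1.tsum_eq, Real.sqrt_one, one_mul] at i2 b2
  rw [← hF] at b1
  have hIf : |∑' x, p x * f x| ≤ F := by
    obtain ⟨a, b⟩ := aux_cs p hp0 hp1.summable f hf2 Set.univ
    simp only [Set.indicator_univ, hp1.tsum_eq, Real.sqrt_one, mul_one] at a b
    refine le_trans ?_ b
    have e : ∀ x, p x * |f x| = ‖p x * f x‖ := fun x => by
      rw [Real.norm_eq_abs, abs_mul, abs_of_nonneg (hp0 x)]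
    simp only [e] at a ⊢
    exact norm_tsum_le_tsum_norm a
  have m2 := mul_meas_ge_le_integral_of_nonneg (Filter.Eventually.of_forall fun _ => abs_nonneg _)
    i2 ε
  set P := Measure.pi fun _ : Fin n => auxQ q with hP
  set B2 : Set (Fin n → 𝒳) := {y | ε ≤ |(∑ j, p (y j) / q (y j)) / n - 1|} with hB2
  have p2 : P.real B2 ≤ ε := by nlinarith
  set B1 : Set (Fin n → 𝒳) :=
    {y | F * ε < |(∑ j, p (y j) / q (y j) * f (y j)) / n - ∑' x, p x * f x|} with hB1
  have p1 : P.real B1 ≤ ε := by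
    rcases hF0.eq_or_lt with h0 | h0
    · have hz : ∀ x, p x * f x = 0 := by
        have h1 : ∑' x, p x * f x ^ 2 = 0 :=
          (Real.sqrt_eq_zero (tsum_nonneg fun x => mul_nonneg (hp0 x) (sq_nonneg _))).1 h0.symm
        have h2 := (hf2.hasSum_iff.2 h1)
        rw [hasSum_zero_iff_of_nonneg (fun x => mul_nonneg (hp0 x) (sq_nonneg _))] at h2
        intro x
        have := congrFun h2 x
        simpa using this
      have hz' : ∀ x, p x / q x * f x = 0 := fun x => by
        rw [div_mul_eq_mul_div, hz, zero_div]
      have : B1 = ∅ := by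
        rw [hB1]; ext y; simp [hz, hz', ← h0]
      rw [this]; simpa using hε0.le
    · have m1 := mul_meas_ge_le_integral_of_nonneg
        (Filter.Eventually.of_forall fun _ => abs_nonneg _) i1 (F * ε)
      have hle : P.real B1 ≤ P.real {y | F * ε ≤ |(∑ j, p (y j) / q (y j) * f (y j)) / n
          - ∑' x, p x * f x|} := measureReal_mono (Set.ofPred_subset_ofPred.2 fun y hy => le_of_lt hy)
      have h1 : F * ε * P.real B1 ≤ F * ε * ε := by
        calc _ ≤ _ := mul_le_mul_of_nonneg_left hle (by positivity)
          _ ≤ _ := m1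
          _ ≤ _ := b1
          _ = _ := by ring
      exact le_of_mul_le_mul_left h1 (by positivity)
  have hsub : (B1 ∪ B2)ᶜ ⊆ {y : Fin n → 𝒳 |
            |(∑ j, p (y j) / q (y j) * f (y j)) / (∑ j, p (y j) / q (y j))
                - ∑' x, p x * f x| ≤ 2 * F * (ε / (1 - ε))} := by
    intro y hy
    simp only [hB1, hB2, Set.mem_compl_iff, Set.mem_union, Set.mem_ofPred_eq, not_or, not_lt,
      not_le] at hy ⊢
    obtain ⟨y1, y2⟩ := hy
    set S := ∑ j, p (y j) / q (y j) * f (y j)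
    set R := ∑ j, p (y j) / q (y j)
    set I := ∑' x, p x * f x
    have hR : 1 - ε < R / n := by linarith [(abs_lt.1 y2).1]
    have hRn : 0 < R / n := by linarith
    have hR0 : 0 < R := by
      rcases div_pos_iff.1 hRn with h | h
      · exact h.1
      · linarith [h.2]
    have e : S / R - I = ((S / n - I) - I * (R / n - 1)) / (R / n) := by
      field_simp; ring
    rw [e, abs_div, abs_of_pos hRn]
    have hnum : |(S / n - I) - I * (R / n - 1)| ≤ 2 * F * ε := by
      refine (abs_sub _ _).trans ?_
      rw [abs_mul]
      have : |I| * |R / n - 1| ≤ F * ε := mul_le_mul hIf y2.le (abs_nonneg _) hF0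
      linarith
    rw [← mul_div_assoc]
    exact div_le_div₀ (by positivity) hnum (by linarith) hR.le
  have hmeas : MeasurableSet (B1 ∪ B2) := (Set.to_countable _).measurableSet
  refine le_trans ?_ (measureReal_mono hsub)
  rw [probReal_compl_eq_one_sub hmeas]
  have := measureReal_union_le (μ := P) B1 B2
  linarith
end

section
/- Let h : 𝒞 → ℝ≥0 be any nonnegative function, and let n_c ≥ 2. Draw C₁,…,C_{n_c} i.i.d. from p_C and an index m from the random categorical distribution w_C on {1,…,n_c} given by w_C(j) = (p_{QC}(C_j)/p_C(C_j)) / Σ_{j'=1}^{n_c} (p_{QC}(C_{j'})/p_C(C_{j'})). Then E[h(C_m)] ≤ (χ²(p_C‖p_{QC}) + 1) · (n_c/(n_c − 1)) · E_{c∼p_{QC}}[h(c)], where the expectation on the left is over both the samples C₁,…,C_{n_c} and the index m. -/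
open scoped BigOperators

/-- Chi-squared divergence `χ²(pC‖pQC) = Σ_{c : pQC(c)>0} pC(c)²/pQC(c) − 1`
between mass functions on a finite alphabet. -/
noncomputable def chiSq {𝒞 : Type*} [Fintype 𝒞] (pC pQC : 𝒞 → ℝ) : ℝ :=
  (∑ c, Set.indicator {c : 𝒞 | 0 < pQC c} (fun c => pC c ^ 2 / pQC c) c) - 1

lemma sum_pi_two {𝒞 : Type*} [Fintype 𝒞] (p f g : 𝒞 → ℝ) (hp : ∑ c, p c = 1)
    (n : ℕ) (m j : Fin n) (hmj : j ≠ m) :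
    ∑ C : Fin n → 𝒞, (∏ k, p (C k)) * (f (C m) * g (C j))
      = (∑ c, p c * f c) * ∑ c, p c * g c := by
  classical
  have key := Finset.prod_univ_sum (fun _ : Fin n => (Finset.univ : Finset 𝒞))
    (fun k c => p c * ((if k = m then f c else 1) * (if k = j then g c else 1)))
  rw [Fintype.piFinset_univ] at key
  have h1 : ∀ C : Fin n → 𝒞, (∏ k, p (C k)) * (f (C m) * g (C j)) =
      ∏ k, (p (C k) * ((if k = m then f (C k) else 1) * (if k = j then g (C k) else 1))) := by
    intro C
    rw [Finset.prod_mul_distrib, Finset.prod_mul_distrib]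
    simp
  rw [Finset.sum_congr rfl (fun C _ => h1 C), ← key]
  have h2 : ∀ k : Fin n,
      ∑ c, (p c * ((if k = m then f c else 1) * (if k = j then g c else 1))) =
      (if k = m then ∑ c, p c * f c else 1) * (if k = j then ∑ c, p c * g c else 1) := by
    intro k
    by_cases hk : k = m
    · have : k ≠ j := fun e => hmj (e ▸ hk)
      simp [hk, hmj.symm]
    · by_cases hj : k = j
      · simp [hj, hmj]
      · simp [hk, hj, hp]
  rw [Finset.prod_congr rfl (fun k _ => h2 k), Finset.prod_mul_distrib]
  simp

lemma weight_bound (n : ℕ) (hn : 2 ≤ n) (r : Fin n → ℝ) (hr : ∀ j, 0 < r j) (m : Fin n) :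
    r m / ∑ j, r j ≤ r m * (1 / ((n : ℝ) - 1) ^ 2 * ∑ j ∈ Finset.univ.erase m, (r j)⁻¹) := by
  have hn' : (0 : ℝ) < (n : ℝ) - 1 := by
    have : (2 : ℝ) ≤ n := by exact_mod_cast hn
    linarith
  have cs := Finset.sum_sq_le_sum_mul_sum_of_sq_eq_mul (Finset.univ.erase m)
    (r := fun _ => (1 : ℝ)) (f := r) (g := fun j => (r j)⁻¹)
    (fun i _ => (hr i).le) (fun i _ => (inv_pos.2 (hr i)).le)
    (fun i _ => by have := (hr i).ne'; field_simp)
  have hcard : ∑ _j ∈ Finset.univ.erase m, (1 : ℝ) = (n : ℝ) - 1 := by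
    rw [Finset.sum_const, Finset.card_erase_of_mem (Finset.mem_univ m)]
    simp
    rw [Nat.cast_sub (by omega)]; simp
  rw [hcard] at cs
  have hB : 0 ≤ ∑ j ∈ Finset.univ.erase m, (r j)⁻¹ :=
    Finset.sum_nonneg fun i _ => (inv_pos.2 (hr i)).le
  have hsum := Finset.add_sum_erase Finset.univ r (Finset.mem_univ m)
  have hS : 0 < ∑ j, r j := Finset.sum_pos (fun i _ => hr i) ⟨m, Finset.mem_univ m⟩
  rw [div_eq_mul_inv]
  refine mul_le_mul_of_nonneg_left ?_ (hr m).le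
  rw [inv_eq_one_div, div_le_iff₀ hS, one_div, mul_assoc, ← div_eq_inv_mul,
    le_div_iff₀ (by positivity)]
  have := mul_nonneg hB (hr m).le
  rw [← hsum]
  nlinarith

/-- expected value of a nonnegative function of the block selected
by importance sampling, bounded via the chi-squared divergence. -/
theorem stmt7 {𝒞 : Type*} [Fintype 𝒞]
    (pC pQC : 𝒞 → ℝ)
    (hpC0 : ∀ c, 0 ≤ pC c) (hpQC0 : ∀ c, 0 ≤ pQC c)
    (hpC1 : ∑ c, pC c = 1) (hpQC1 : ∑ c, pQC c = 1)
    (hac1 : ∀ c, pC c = 0 → pQC c = 0)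
    (hac2 : ∀ c, pQC c = 0 → pC c = 0)
    (nc : ℕ) (hnc : 2 ≤ nc)
    (h : 𝒞 → ℝ) (hh : ∀ c, 0 ≤ h c) :
    ∑ C : Fin nc → 𝒞, (∏ j, pC (C j)) *
        ∑ m : Fin nc,
          ((pQC (C m) / pC (C m)) / ∑ j, pQC (C j) / pC (C j)) * h (C m)
      ≤ (chiSq pC pQC + 1) * ((nc : ℝ) / ((nc : ℝ) - 1)) * ∑ c, pQC c * h c := by
  have hn' : (0 : ℝ) < (nc : ℝ) - 1 := by
    have : (2 : ℝ) ≤ nc := by exact_mod_cast hnc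
    linarith
  have hchi : chiSq pC pQC + 1 = ∑ c, pC c * (pQC c / pC c)⁻¹ := by
    unfold chiSq
    rw [sub_add_cancel]
    refine Finset.sum_congr rfl fun c _ => ?_
    by_cases hc : 0 < pQC c
    · rw [Set.indicator_of_mem (by exact hc), inv_div]; ring
    · rw [Set.indicator_of_notMem (by exact hc),
        hac2 c (le_antisymm (not_lt.1 hc) (hpQC0 c))]; simp
  have hQ : ∑ c, pQC c * h c = ∑ c, pC c * (pQC c / pC c * h c) := by
    refine Finset.sum_congr rfl fun c _ => ?_
    by_cases hc : pC c = 0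
    · simp [hc, hac1 c hc]
    · field_simp
  have hpt : ∀ C : Fin nc → 𝒞, (∏ j, pC (C j)) *
        ∑ m : Fin nc, ((pQC (C m) / pC (C m)) / ∑ j, pQC (C j) / pC (C j)) * h (C m)
      ≤ ∑ m : Fin nc, ∑ j ∈ Finset.univ.erase m, 1 / ((nc : ℝ) - 1) ^ 2 *
        ((∏ k, pC (C k)) * ((pQC (C m) / pC (C m) * h (C m)) * (pQC (C j) / pC (C j))⁻¹)) := by
    intro C
    by_cases hz : ∏ j, pC (C j) = 0
    · simp [hz]
    · have hpos : ∀ j, 0 < pC (C j) := fun j =>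
        lt_of_le_of_ne (hpC0 _) (Ne.symm (Finset.prod_ne_zero_iff.1 hz j (Finset.mem_univ j)))
      have hr : ∀ j, 0 < pQC (C j) / pC (C j) := fun j =>
        div_pos (lt_of_le_of_ne (hpQC0 _) fun e => (hpos j).ne' (hac2 _ e.symm)) (hpos j)
      rw [Finset.mul_sum]
      refine Finset.sum_le_sum fun m _ => ?_
      have hw := weight_bound nc hnc (fun j => pQC (C j) / pC (C j)) hr m
      have h2 := mul_le_mul_of_nonneg_left (mul_le_mul_of_nonneg_right hw (hh (C m)))
        (Finset.prod_nonneg fun j (_ : j ∈ Finset.univ) => hpC0 (C j))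
      refine h2.trans (le_of_eq ?_)
      simp only [← Finset.mul_sum]
      ring
  refine (Finset.sum_le_sum fun C _ => hpt C).trans (le_of_eq ?_)
  rw [Finset.sum_comm]
  have hm : ∀ m : Fin nc, ∑ C : Fin nc → 𝒞, ∑ j ∈ Finset.univ.erase m,
      1 / ((nc : ℝ) - 1) ^ 2 * ((∏ k, pC (C k)) *
        ((pQC (C m) / pC (C m) * h (C m)) * (pQC (C j) / pC (C j))⁻¹))
      = 1 / ((nc : ℝ) - 1) * ((∑ c, pQC c * h c) * (chiSq pC pQC + 1)) := by
    intro m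
    rw [Finset.sum_comm]
    have hj : ∀ j ∈ Finset.univ.erase m, ∑ C : Fin nc → 𝒞,
        1 / ((nc : ℝ) - 1) ^ 2 * ((∏ k, pC (C k)) *
        ((pQC (C m) / pC (C m) * h (C m)) * (pQC (C j) / pC (C j))⁻¹))
        = 1 / ((nc : ℝ) - 1) ^ 2 * ((∑ c, pQC c * h c) * (chiSq pC pQC + 1)) := by
      intro j hj
      rw [← Finset.mul_sum, sum_pi_two pC (fun c => pQC c / pC c * h c)
        (fun c => (pQC c / pC c)⁻¹) hpC1 nc m j (Finset.ne_of_mem_erase hj), hchi, hQ]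
    rw [Finset.sum_congr rfl hj, Finset.sum_const,
      Finset.card_erase_of_mem (Finset.mem_univ m), Finset.card_univ, Fintype.card_fin,
      nsmul_eq_mul, Nat.cast_sub (by omega), Nat.cast_one]
    field_simp
  rw [Finset.sum_congr rfl (fun m _ => hm m), Finset.sum_const, Finset.card_univ,
    Fintype.card_fin, nsmul_eq_mul]
  ring
end
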